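/- arXiv:math/0306246 — 2 statements merged into one kernel-verified Lean document; each statement's English description precedes it below -/
import Mathlib

section
/- For every ε > 0: lim_{k→∞} τ(k, ⌈(2+ε)k⌉) = 0. -/
open Finset Filter MeasureTheory

open scoped Classical

noncomputable section

/-- The vertex set `{0,1}^d` of the 0/1-cube, as a finite subset of `ℝ^d`. -/
def cube01 (d : ℕ) : Finset (Fin d → ℝ) :=
  (Finset.univ : Finset (Fin d → Bool)).image (fun f i => if f i then 1 else 0)

/-- The vertex set `{-1,+1}^d` of the `±1`-cube, as a finite subset of `ℝ^d`. -/
def pmCube (d : ℕ) : Finset (Fin d → ℝ) :=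
  (Finset.univ : Finset (Fin d → Bool)).image (fun f i => if f i then 1 else -1)

/-- The all-one vector `𝟙 ∈ ℝ^d`. -/
def allOne (d : ℕ) : Fin d → ℝ := fun _ => 1

/-- `C^d_* = {-1,+1}^d \ {-𝟙, 𝟙}`. -/
def pmCubeStar (d : ℕ) : Finset (Fin d → ℝ) :=
  (pmCube d) \ {-(allOne d), allOne d}

/-- `{v,w}` spans an edge (a one-dimensional face) of the polytope `P`:
`v ≠ w` and the segment `[v,w]` is an (exposed) face of `P`. -/
def IsEdge {d : ℕ} (P : Set (Fin d → ℝ)) (v w : Fin d → ℝ) : Prop :=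
  v ≠ w ∧ IsExposed ℝ P (segment ℝ v w)

/-- The number of edges of the graph of the polytope `conv X`. -/
noncomputable def edgeCount {d : ℕ} (X : Finset (Fin d → ℝ)) : ℕ :=
  ((X.powersetCard 2).filter (fun e =>
      ∃ v w, e = {v, w} ∧ IsEdge (convexHull ℝ (X : Set (Fin d → ℝ))) v w)).card

/-- The density of the graph of the polytope `conv X` (whose vertex set is `X`
when `X` consists of 0/1- or `±1`-points): number of edges divided by `C(|X|,2)`. -/
noncomputable def graphDensity {d : ℕ} (X : Finset (Fin d → ℝ)) : ℝ :=
  (edgeCount X : ℝ) / (X.card.choose 2 : ℝ)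

/-- The expected graph-density of the convex hull of a uniformly random
`n`-element subset of `{0,1}^d`. -/
noncomputable def expDensity (d n : ℕ) : ℝ :=
  (∑ X ∈ (cube01 d).powersetCard n, graphDensity X) /
    (((cube01 d).powersetCard n).card : ℝ)

/-- The Hamming distance of `v, w ∈ ℝ^d`. -/
def hdist {d : ℕ} (v w : Fin d → ℝ) : ℕ :=
  (Finset.univ.filter (fun i => v i ≠ w i)).card

/-- `C(v,w)`: the points of the `±1`-cube agreeing with `v` and `w` wherever these agree
(the vertex set of the smallest face of the cube containing `v` and `w`). -/
def cubeFace {d : ℕ} (v w : Fin d → ℝ) : Finset (Fin d → ℝ) :=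
  (pmCube d).filter (fun x => ∀ i, v i = w i → x i = v i)

/-- `C_*(v,w) = C(v,w) \ {v,w}`. -/
def cubeFaceStar {d : ℕ} (v w : Fin d → ℝ) : Finset (Fin d → ℝ) :=
  (cubeFace v w) \ {v, w}

/-- The long-edge probability `τ(k,m)`: the probability that for a uniformly random
`m`-element subset `Y ⊆ C^k_*`, `conv Y ∩ conv{-𝟙,𝟙} = ∅`. -/
noncomputable def tau (k m : ℕ) : ℝ :=
  ((((pmCubeStar k).powersetCard m).filter (fun Y =>
      convexHull ℝ (Y : Set (Fin k → ℝ)) ∩ segment ℝ (-(allOne k)) (allOne k) = ∅)).card : ℝ) /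
    ((((pmCubeStar k).powersetCard m)).card : ℝ)

/-- `Y ∩ (-Y) = ∅`. -/
def NoAntipodal {k : ℕ} (Y : Finset (Fin k → ℝ)) : Prop := ∀ y ∈ Y, -y ∉ Y

/-- `α(k,m)`: the conditional probability that `conv Y ∩ conv{-𝟙,𝟙} = ∅`
given `Y ∩ (-Y) = ∅`, for a uniformly random `m`-element subset `Y ⊆ C^k_*`. -/
noncomputable def alpha (k m : ℕ) : ℝ :=
  ((((pmCubeStar k).powersetCard m).filter (fun (Y : Finset (Fin k → ℝ)) =>
      convexHull ℝ (Y : Set (Fin k → ℝ)) ∩ segment ℝ (-(allOne k)) (allOne k) = ∅ ∧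
        NoAntipodal Y)).card : ℝ) /
    ((((pmCubeStar k).powersetCard m).filter (fun Y => NoAntipodal Y)).card : ℝ)

/-- The sample space for a uniformly random `n`-element subset `X ⊆ {-1,+1}^d`
together with a uniformly random `2`-element subset `{v,w} ⊆ X`. -/
def edgeSpace (d n : ℕ) : Finset (Finset (Fin d → ℝ) × Finset (Fin d → ℝ)) :=
  (((pmCube d).powersetCard n) ×ˢ ((pmCube d).powersetCard 2)).filter (fun p => p.2 ⊆ p.1)

/-- The event that the chosen pair `{v,w}` is an edge of `conv X`. -/
def EdgeEvent {d : ℕ} (p : Finset (Fin d → ℝ) × Finset (Fin d → ℝ)) : Prop :=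
  ∃ v w, p.2 = {v, w} ∧ IsEdge (convexHull ℝ (p.1 : Set (Fin d → ℝ))) v w

/-- The event that the chosen pair `{v,w}` satisfies `dist(v,w) = k`. -/
def DistEvent {d : ℕ} (k : ℕ) (p : Finset (Fin d → ℝ) × Finset (Fin d → ℝ)) : Prop :=
  ∃ v w, v ≠ w ∧ p.2 = {v, w} ∧ hdist v w = k

/-- The event that the chosen pair `{v,w}` satisfies `dist(v,w) = k` and
`#(X ∩ C_*(v,w)) = m`. -/
def DistCapEvent {d : ℕ} (k m : ℕ) (p : Finset (Fin d → ℝ) × Finset (Fin d → ℝ)) : Prop :=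
  ∃ v w, v ≠ w ∧ p.2 = {v, w} ∧ hdist v w = k ∧ (p.1 ∩ cubeFaceStar v w).card = m

/-- The edge probability `π(d,n)`. -/
noncomputable def piEdge (d n : ℕ) : ℝ :=
  (((edgeSpace d n).filter (fun p => EdgeEvent p)).card : ℝ) / ((edgeSpace d n).card : ℝ)

/-- The conditional edge probability `π_k(d,n)` given `dist(v,w) = k`. -/
noncomputable def piEdgeK (d n k : ℕ) : ℝ :=
  (((edgeSpace d n).filter (fun p => EdgeEvent p ∧ DistEvent k p)).card : ℝ) /
    (((edgeSpace d n).filter (fun p => DistEvent k p)).card : ℝ)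

/-- `φ : ℝ^{r+1} → ℝ^r`: the orthogonal projection onto the hyperplane
`H_𝟙 = {x : 𝟙ᵀx = 0}` (namely `x ↦ x - ((𝟙ᵀx)/(r+1))·𝟙`), followed by the
projection to the first `r` coordinates. -/
noncomputable def phi (r : ℕ) (x : Fin (r + 1) → ℝ) : Fin r → ℝ :=
  fun i => x i.castSucc - (∑ j, x j) / (r + 1 : ℝ)

/-- The vector configuration `V_r = φ(C^{r+1}_*)`. -/
noncomputable def Vr (r : ℕ) : Finset (Fin r → ℝ) := (pmCubeStar (r + 1)).image (phi r)

/-- The half configuration `V_r^+ = φ({v ∈ C^{r+1}_* : v_{r+1} = +1})`. -/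
noncomputable def VrPlus (r : ℕ) : Finset (Fin r → ℝ) :=
  (((pmCubeStar (r + 1)).filter (fun v => v (Fin.last r) = 1))).image (phi r)

/-- The number of sign vectors `ε ∈ {-1,+1}^S` with `0 ∉ conv{ε_s · s : s ∈ S}`. -/
noncomputable def signCount {r : ℕ} (S : Finset (Fin r → ℝ)) : ℕ :=
  ((Finset.univ : Finset (↥S → Bool)).filter (fun ε =>
      (0 : Fin r → ℝ) ∉ convexHull ℝ
        (Set.range fun s : ↥S => (if ε s then (1 : ℝ) else -1) • (s : Fin r → ℝ)))).card

/-- `α(S)`: the probability that `0 ∉ conv{ε_s · s : s ∈ S}` for a uniformly random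
sign vector `ε ∈ {-1,+1}^S`. -/
noncomputable def alphaSet {r : ℕ} (S : Finset (Fin r → ℝ)) : ℝ :=
  (signCount S : ℝ) / ((Finset.univ : Finset (↥S → Bool)).card : ℝ)

/-- The complement `ℝ^r \ ⋃_{s ∈ S} H(s)` of the hyperplane arrangement `ℋ(S)`. -/
def arrComplement {r : ℕ} (S : Finset (Fin r → ℝ)) : Set (Fin r → ℝ) :=
  {x | ∀ s ∈ S, ∑ i, s i * x i ≠ 0}

/-- `χ(S)`: the number of chambers (connected components of the complement)
of the hyperplane arrangement `ℋ(S)`. -/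
noncomputable def chi {r : ℕ} (S : Finset (Fin r → ℝ)) : ℕ :=
  Nat.card (ConnectedComponents ↥(arrComplement S))

/-- `b(p,q) = ∑_{i=0}^p C(q,i)`. -/
def bFn (p q : ℕ) : ℕ := ∑ i ∈ Finset.range (p + 1), q.choose i

/-! The segment `conv{-𝟙, 𝟙}` contains the origin, so a set `Y` whose convex hull misses it lies
in an open halfspace through the origin. Such a `Y` contains at most one point of each antipodal
pair, and once the `m` pairs it meets are fixed, the possible choices of one point from each of
them correspond to the traces of halfspaces on a set of `m` representatives. A set shattered by
halfspaces through the origin is linearly independent, so by the Sauer–Shelah lemma at most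
`∑ i ≤ k, C(m, i)` of the `2 ^ m` choices occur. Hence `τ(k, m)` is at most the probability that
a binomial variable `B(m, 1/2)` is at most `k`, which by Hoeffding's bound is exponentially small
when `m ≥ (2 + ε) k`. -/

theorem pow_mul_choose_le_choose_mul (a n m : ℕ) : a ^ m * n.choose m ≤ (a * n).choose m := by
  have pow_mul_descFactorial_le : a ^ m * n.descFactorial m ≤ (a * n).descFactorial m := by
    induction m with
    | zero => simp
    | succ m ih =>
      have factor_le : a * (n - m) ≤ a * n - m := by
        rcases a.eq_zero_or_pos with rfl | ha
        · simp
        · rw [Nat.mul_sub]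
          exact Nat.sub_le_sub_left (Nat.le_mul_of_pos_left m ha) _
      calc a ^ (m + 1) * n.descFactorial (m + 1)
          = a * (n - m) * (a ^ m * n.descFactorial m) := by rw [Nat.descFactorial_succ]; ring
        _ ≤ (a * n - m) * (a * n).descFactorial m := Nat.mul_le_mul factor_le ih
        _ = (a * n).descFactorial (m + 1) := (Nat.descFactorial_succ _ _).symm
  refine Nat.le_of_mul_le_mul_left ?_ m.factorial_pos
  rw [mul_left_comm, ← Nat.descFactorial_eq_factorial_mul_choose,
    ← Nat.descFactorial_eq_factorial_mul_choose]
  exact pow_mul_descFactorial_le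

section AntipodalPairs

open scoped Pointwise

variable {E : Type*} [InvolutiveNeg E] [DecidableEq E]

theorem exists_disjoint_neg_union_neg_eq {S : Finset E} (hneg : -S = S) (hne : ∀ s ∈ S, -s ≠ s) :
    ∃ H : Finset E, Disjoint H (-H) ∧ H ∪ -H = S := by
  obtain ⟨H, hH⟩ := (S.powerset.filter fun H => Disjoint H (-H)).exists_maximal
    ⟨∅, mem_filter.2 ⟨empty_mem_powerset S, disjoint_empty_left _⟩⟩
  obtain ⟨hHS, hdisj⟩ := mem_filter.1 hH.prop
  rw [mem_powerset] at hHS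
  refine ⟨H, hdisj, Subset.antisymm (union_subset hHS ?_) fun s hs => ?_⟩
  · exact hneg ▸ neg_subset_neg hHS
  · by_contra hsH
    obtain ⟨hs_notMem, hs_neg_notMem⟩ := notMem_union.1 hsH
    have disjoint_insert : Disjoint (insert s H) (-insert s H) := by
      rw [neg_insert]
      simp only [disjoint_insert_left, disjoint_insert_right, mem_insert, not_or]
      exact ⟨⟨hne s hs, mt mem_neg'.2 hs_neg_notMem⟩, hs_neg_notMem, hdisj⟩
    have insert_le : insert s H ≤ H := hH.le_of_ge
      (mem_filter.2 ⟨mem_powerset.2 (insert_subset hs hHS), disjoint_insert⟩) (subset_insert s H)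
    exact hs_notMem (insert_le (mem_insert_self s H))

theorem inter_union_neg_sdiff_inter {H Y : Finset E} (hY : Disjoint Y (-Y)) :
    (H ∩ (Y ∪ -Y)) \ (H ∩ Y) = H ∩ -Y := by
  rw [inter_union_distrib_left,
    union_sdiff_cancel_left (hY.mono inter_subset_right inter_subset_right)]

theorem inter_union_neg_inter_neg {H Y : Finset E} (hYH : Y ⊆ H ∪ -H) :
    (H ∩ Y) ∪ -(H ∩ -Y) = Y := by
  ext y
  simp only [mem_union, mem_inter, mem_neg', neg_neg, ← or_and_right]
  exact and_iff_right_of_imp fun hy => by simpa only [mem_union, mem_neg'] using hYH hy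

theorem card_inter_union_neg {H Y : Finset E} (hH : Disjoint H (-H)) (hY : Disjoint Y (-Y))
    (hYH : Y ⊆ H ∪ -H) : (H ∩ (Y ∪ -Y)).card = Y.card := by
  have disjoint_of_hY : Disjoint (H ∩ Y) (H ∩ -Y) := hY.mono inter_subset_right inter_subset_right
  have disjoint_of_hH : Disjoint (H ∩ Y) (-(H ∩ -Y)) :=
    hH.mono inter_subset_left (neg_subset_neg inter_subset_left)
  calc (H ∩ (Y ∪ -Y)).card
      = (H ∩ Y).card + (-(H ∩ -Y)).card := by
        rw [inter_union_distrib_left, card_union_of_disjoint disjoint_of_hY, card_neg]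
    _ = Y.card := by
        rw [← card_union_of_disjoint disjoint_of_hH, inter_union_neg_inter_neg hYH]

end AntipodalPairs

section Halfspace

variable (𝕜 : Type*) {E : Type*} [Field 𝕜] [LinearOrder 𝕜] [AddCommGroup E]
  [Module 𝕜 E]

/-- A finite set of vectors is contained in an open halfspace `{x | 0 < f x}` bounded by a
hyperplane through the origin. -/
def InOpenHalfspace (Y : Finset E) : Prop :=
  ∃ f : Module.Dual 𝕜 E, ∀ y ∈ Y, 0 < f y

/-- The traces on `S` of the open halfspaces `{x | 0 < f x}`; the functional `f = 0` is allowed and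
contributes the empty trace. -/
def halfspaceTraces (S : Finset E) : Finset (Finset E) :=
  S.powerset.filter fun T => ∃ f : Module.Dual 𝕜 E, S.filter (fun s => 0 < f s) = T

variable {𝕜}

theorem filter_pos_mem_halfspaceTraces (f : Module.Dual 𝕜 E) (S : Finset E) :
    S.filter (fun s => 0 < f s) ∈ halfspaceTraces 𝕜 S :=
  mem_filter.2 ⟨mem_powerset.2 (filter_subset _ _), f, rfl⟩

theorem subset_of_shatters_halfspaceTraces [DecidableEq E] {S U : Finset E}
    (hU : (halfspaceTraces 𝕜 S).Shatters U) : U ⊆ S := by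
  obtain ⟨T, hT, hUT⟩ := hU.exists_superset
  exact hUT.trans (mem_powerset.1 (mem_filter.1 hT).1)

variable [IsStrictOrderedRing 𝕜]

/-- If `c` had a positive coefficient, a functional that is positive exactly where `c` is would be
positive on `∑ u ∈ U, c u • u`. -/
theorem nonpos_of_shatters_halfspaceTraces [DecidableEq E] {S U : Finset E}
    (hU : (halfspaceTraces 𝕜 S).Shatters U) {c : E → 𝕜} (hc : ∑ u ∈ U, c u • u = 0) :
    ∀ u ∈ U, c u ≤ 0 := by
  obtain ⟨T, hT, hUT⟩ := hU (filter_subset (fun u => 0 < c u) U)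
  obtain ⟨f, rfl⟩ := (mem_filter.1 hT).2
  have pos_iff : ∀ u ∈ U, 0 < f u ↔ 0 < c u := fun u hu => by
    simpa [hu, subset_of_shatters_halfspaceTraces hU hu] using Finset.ext_iff.1 hUT u
  have term_nonneg : ∀ u ∈ U, 0 ≤ c u * f u := fun u hu => by
    rcases lt_or_ge 0 (c u) with hcu | hcu
    · exact (mul_pos hcu ((pos_iff u hu).2 hcu)).le
    · exact mul_nonneg_of_nonpos_of_nonpos hcu
        (not_lt.1 fun hfu => hcu.not_gt ((pos_iff u hu).1 hfu))
  have sum_eq_zero : ∑ u ∈ U, c u * f u = 0 := by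
    simpa only [map_sum, map_smul, smul_eq_mul, map_zero] using congrArg f hc
  intro u hu
  by_contra! hcu
  exact (mul_pos hcu ((pos_iff u hu).2 hcu)).ne'
    ((sum_eq_zero_iff_of_nonneg term_nonneg).1 sum_eq_zero u hu)

theorem linearIndepOn_of_shatters_halfspaceTraces [DecidableEq E] {S U : Finset E}
    (hU : (halfspaceTraces 𝕜 S).Shatters U) : LinearIndepOn 𝕜 id (U : Set E) := by
  refine linearIndepOn_finset_iff.2 fun c hc u hu => le_antisymm ?_ ?_
  · exact nonpos_of_shatters_halfspaceTraces hU hc u hu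
  · have hneg : ∑ u ∈ U, (-c) u • u = 0 := by
      simpa only [Pi.neg_apply, neg_smul, sum_neg_distrib, neg_eq_zero, id_eq] using hc
    exact neg_nonpos.1 (nonpos_of_shatters_halfspaceTraces hU hneg u hu)

theorem card_halfspaceTraces_le [Module.Finite 𝕜 E] (S : Finset E) :
    (halfspaceTraces 𝕜 S).card ≤ ∑ i ∈ range (Module.finrank 𝕜 E + 1), S.card.choose i := by
  have shatterer_subset : (halfspaceTraces 𝕜 S).shatterer ⊆
      (range (Module.finrank 𝕜 E + 1)).biUnion fun i => S.powersetCard i := by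
    intro U hU
    have hU := mem_shatterer.1 hU
    have hcard : U.card ≤ Module.finrank 𝕜 E :=
      (linearIndepOn_of_shatters_halfspaceTraces hU).finset_card_le_finrank
    exact mem_biUnion.2 ⟨U.card, mem_range.2 (Nat.lt_succ_of_le hcard),
      mem_powersetCard.2 ⟨subset_of_shatters_halfspaceTraces hU, rfl⟩⟩
  calc (halfspaceTraces 𝕜 S).card
      ≤ (halfspaceTraces 𝕜 S).shatterer.card := card_le_card_shatterer _
    _ ≤ ((range (Module.finrank 𝕜 E + 1)).biUnion fun i => S.powersetCard i).card :=
        card_le_card shatterer_subset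
    _ ≤ ∑ i ∈ range (Module.finrank 𝕜 E + 1), (S.powersetCard i).card := card_biUnion_le
    _ = ∑ i ∈ range (Module.finrank 𝕜 E + 1), S.card.choose i := by simp only [card_powersetCard]

open scoped Pointwise

variable [DecidableEq E]

theorem InOpenHalfspace.disjoint_neg {Y : Finset E} (hY : InOpenHalfspace 𝕜 Y) :
    Disjoint Y (-Y) := by
  obtain ⟨f, hf⟩ := hY
  refine disjoint_left.2 fun y hy hy_neg => lt_asymm (hf y hy) (neg_pos.1 ?_)
  simpa only [map_neg] using hf (-y) (mem_neg'.1 hy_neg)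

/-- The witness `T` consists of the representatives in `H` of the antipodal pairs met by `Y`, and
`P` of those representatives that belong to `Y` themselves. -/
theorem InOpenHalfspace.exists_union_neg_sdiff_eq {H Y : Finset E} (hY : InOpenHalfspace 𝕜 Y)
    (hH : Disjoint H (-H)) (hYH : Y ⊆ H ∪ -H) :
    ∃ T ∈ H.powersetCard Y.card, ∃ P ∈ halfspaceTraces 𝕜 T, P ∪ -(T \ P) = Y := by
  have card_eq := card_inter_union_neg hH hY.disjoint_neg hYH
  have union_eq : (H ∩ Y) ∪ -((H ∩ (Y ∪ -Y)) \ (H ∩ Y)) = Y := by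
    rw [inter_union_neg_sdiff_inter hY.disjoint_neg, inter_union_neg_inter_neg hYH]
  obtain ⟨f, hf⟩ := hY
  have trace_eq : (H ∩ (Y ∪ -Y)).filter (fun h => 0 < f h) = H ∩ Y := by
    ext h
    have pos_of_mem : h ∈ Y → 0 < f h := hf h
    have neg_of_neg_mem : -h ∈ Y → f h < 0 := fun hh => neg_pos.1 (map_neg f h ▸ hf (-h) hh)
    simp only [mem_filter, mem_inter, mem_union, mem_neg']
    grind
  exact ⟨H ∩ (Y ∪ -Y), mem_powersetCard.2 ⟨inter_subset_left, card_eq⟩, H ∩ Y,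
    trace_eq ▸ filter_pos_mem_halfspaceTraces f _, union_eq⟩

theorem card_filter_inOpenHalfspace_union_neg_le [Module.Finite 𝕜 E] {H : Finset E}
    (hH : Disjoint H (-H)) (m : ℕ) :
    (((H ∪ -H).powersetCard m).filter (InOpenHalfspace 𝕜)).card ≤
      H.card.choose m * ∑ i ∈ range (Module.finrank 𝕜 E + 1), m.choose i := by
  have subset_image : ((H ∪ -H).powersetCard m).filter (InOpenHalfspace 𝕜) ⊆
      (H.powersetCard m).biUnion fun T => (halfspaceTraces 𝕜 T).image fun P => P ∪ -(T \ P) := by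
    intro Y hY
    obtain ⟨hYm, hYpos⟩ := mem_filter.1 hY
    obtain ⟨hYH, rfl⟩ := mem_powersetCard.1 hYm
    obtain ⟨T, hT, P, hP, rfl⟩ := hYpos.exists_union_neg_sdiff_eq hH hYH
    exact mem_biUnion.2 ⟨T, hT, mem_image_of_mem _ hP⟩
  rw [← card_powersetCard]
  refine (card_le_card subset_image).trans (card_biUnion_le_card_mul _ _ _ fun T hT => ?_)
  rw [← (mem_powersetCard.1 hT).2]
  exact card_image_le.trans (card_halfspaceTraces_le T)

theorem two_pow_mul_card_filter_inOpenHalfspace_le [Module.Finite 𝕜 E] {S : Finset E}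
    (hneg : -S = S) (h0 : (0 : E) ∉ S) (m : ℕ) :
    2 ^ m * ((S.powersetCard m).filter (InOpenHalfspace 𝕜)).card ≤
      (∑ i ∈ range (Module.finrank 𝕜 E + 1), m.choose i) * (S.powersetCard m).card := by
  have neg_ne_self : ∀ s ∈ S, -s ≠ s := fun s hs hs_neg => by
    have two_smul_eq_zero : (2 : 𝕜) • s = 0 := by rw [two_smul, add_eq_zero_iff_neg_eq, hs_neg]
    exact h0 ((smul_eq_zero_iff_right two_ne_zero).1 two_smul_eq_zero ▸ hs)
  obtain ⟨H, hH, rfl⟩ := exists_disjoint_neg_union_neg_eq hneg neg_ne_self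
  have card_union : (H ∪ -H).card = 2 * H.card := by
    rw [card_union_of_disjoint hH, card_neg, two_mul]
  set B := ∑ i ∈ range (Module.finrank 𝕜 E + 1), m.choose i
  calc 2 ^ m * (((H ∪ -H).powersetCard m).filter (InOpenHalfspace 𝕜)).card
      ≤ 2 ^ m * (H.card.choose m * B) :=
        Nat.mul_le_mul_left _ (card_filter_inOpenHalfspace_union_neg_le hH m)
    _ = B * (2 ^ m * H.card.choose m) := by ring
    _ ≤ B * ((H ∪ -H).powersetCard m).card := by
        rw [card_powersetCard, card_union]
        exact Nat.mul_le_mul_left _ (pow_mul_choose_le_choose_mul 2 _ m)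

end Halfspace

theorem inOpenHalfspace_of_zero_notMem_convexHull {E : Type*} [AddCommGroup E] [Module ℝ E]
    [TopologicalSpace E] [IsTopologicalAddGroup E] [ContinuousSMul ℝ E] [LocallyConvexSpace ℝ E]
    [T2Space E] {Y : Finset E} (h : (0 : E) ∉ convexHull ℝ (Y : Set E)) :
    InOpenHalfspace ℝ Y := by
  obtain ⟨f, u, h0u, huf⟩ := geometric_hahn_banach_point_closed (convex_convexHull ℝ _)
    (Y.finite_toSet.isClosed_convexHull ℝ) h
  rw [map_zero] at h0u
  exact ⟨f.toLinearMap, fun y hy => h0u.trans (huf y (subset_convexHull ℝ _ hy))⟩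

section BinomialTail

open Real

theorem sum_range_choose_mul_exp_le {k m : ℕ} (hkm : k ≤ m) {t : ℝ} (ht : 0 ≤ t) :
    (∑ i ∈ range (k + 1), (m.choose i : ℝ)) * exp (t * (m - 2 * k)) ≤ (2 * cosh t) ^ m := by
  have exp_term : ∀ i ∈ range (m + 1),
      exp (-t) ^ i * exp t ^ (m - i) = exp (t * (m - 2 * i)) := fun i hi => by
    rw [← exp_nat_mul, ← exp_nat_mul, ← exp_add, Nat.cast_sub (mem_range_succ_iff.1 hi)]
    ring_nf
  calc (∑ i ∈ range (k + 1), (m.choose i : ℝ)) * exp (t * (m - 2 * k))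
      ≤ ∑ i ∈ range (k + 1), exp (t * (m - 2 * i)) * m.choose i := by
        rw [sum_mul]
        refine sum_le_sum fun i hi => ?_
        have hik : (i : ℝ) ≤ k := Nat.cast_le.2 (mem_range_succ_iff.1 hi)
        rw [mul_comm]
        gcongr
    _ ≤ ∑ i ∈ range (m + 1), exp (t * (m - 2 * i)) * m.choose i :=
        sum_le_sum_of_subset_of_nonneg (range_mono (by lia)) fun _ _ _ => by positivity
    _ = (exp (-t) + exp t) ^ m := by
        rw [add_pow]
        exact sum_congr rfl fun i hi => by rw [exp_term i hi]
    _ = (2 * cosh t) ^ m := by rw [cosh_eq]; ring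

theorem sum_range_choose_le_two_pow_mul_exp {k m : ℕ} {δ : ℝ} (hδ : 0 ≤ δ)
    (hkm : 2 * (k : ℝ) ≤ (1 - δ) * m) :
    ∑ i ∈ range (k + 1), (m.choose i : ℝ) ≤ 2 ^ m * exp (-(δ ^ 2 / 2) * m) := by
  have hδm : 0 ≤ δ * m := by positivity
  have hle : k ≤ m := by exact_mod_cast (by linarith : (k : ℝ) ≤ m)
  have exp_le : exp (δ * (δ * m)) ≤ exp (δ * (m - 2 * k)) := by
    gcongr
    linarith
  have tail_mul_le : (∑ i ∈ range (k + 1), (m.choose i : ℝ)) * exp (δ * (δ * m)) ≤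
      2 ^ m * exp (δ ^ 2 / 2 * m) :=
    calc (∑ i ∈ range (k + 1), (m.choose i : ℝ)) * exp (δ * (δ * m))
        ≤ (∑ i ∈ range (k + 1), (m.choose i : ℝ)) * exp (δ * (m - 2 * k)) := by gcongr
      _ ≤ (2 * cosh δ) ^ m := sum_range_choose_mul_exp_le hle hδ
      _ ≤ (2 * exp (δ ^ 2 / 2)) ^ m := by
          gcongr
          exact cosh_le_exp_half_sq δ
      _ = 2 ^ m * exp (δ ^ 2 / 2 * m) := by rw [mul_pow, ← exp_nat_mul, mul_comm (m : ℝ)]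
  calc ∑ i ∈ range (k + 1), (m.choose i : ℝ)
      ≤ 2 ^ m * exp (δ ^ 2 / 2 * m) / exp (δ * (δ * m)) := (le_div_iff₀ (exp_pos _)).2 tail_mul_le
    _ = 2 ^ m * exp (-(δ ^ 2 / 2) * m) := by
        rw [mul_div_assoc, ← exp_sub]
        ring_nf

end BinomialTail

section LongEdge

open scoped Pointwise

theorem mem_pmCube {k : ℕ} {y : Fin k → ℝ} : y ∈ pmCube k ↔ ∀ i, y i = 1 ∨ y i = -1 := by
  simp only [pmCube, mem_image, mem_univ, true_and]
  constructor
  · rintro ⟨b, rfl⟩ i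
    exact ite_eq_or_eq _ _ _
  · intro hy
    refine ⟨fun i => decide (y i = 1), funext fun i => ?_⟩
    rcases hy i with hi | hi <;> simp only [hi, decide_true] <;> norm_num

theorem neg_pmCube (k : ℕ) : -pmCube k = pmCube k := by
  ext y
  simp only [mem_neg', mem_pmCube, Pi.neg_apply, neg_eq_iff_eq_neg, neg_neg, or_comm]

theorem neg_pmCubeStar (k : ℕ) : -pmCubeStar k = pmCubeStar k := by
  ext y
  have mem_iff : -y ∈ pmCube k ↔ y ∈ pmCube k := by rw [← mem_neg', neg_pmCube]
  simp only [pmCubeStar, mem_neg', Finset.mem_sdiff, mem_iff, mem_insert, mem_singleton,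
    neg_eq_iff_eq_neg, neg_neg, or_comm]

/-- In dimension `0` the origin is a vertex of the cube, but it then equals `𝟙`. -/
theorem zero_notMem_pmCubeStar (k : ℕ) : (0 : Fin k → ℝ) ∉ pmCubeStar k := by
  intro h
  obtain ⟨hcube, hne⟩ := Finset.mem_sdiff.1 h
  have isEmpty : Fin k → False := fun i => by simpa using mem_pmCube.1 hcube i
  exact hne (mem_insert_of_mem (mem_singleton.2 (funext fun i => (isEmpty i).elim)))

theorem zero_mem_segment_neg_self {E : Type*} [AddCommGroup E] [Module ℝ E] (x : E) :
    (0 : E) ∈ segment ℝ (-x) x :=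
  ⟨1 / 2, 1 / 2, by norm_num, by norm_num, by norm_num, by simp⟩

/-- The event in the definition of `tau` is elaborated as a predicate on `Set (Fin k → ℝ)`, so the
sample space there is the image of `(pmCubeStar k).powersetCard m` under the coercion. -/
theorem tau_eq_card_div_card (k m : ℕ) :
    tau k m = (((pmCubeStar k).powersetCard m).filter (fun Y : Finset (Fin k → ℝ) =>
      convexHull ℝ (Y : Set (Fin k → ℝ)) ∩ segment ℝ (-(allOne k)) (allOne k) = ∅)).card /
        ((pmCubeStar k).powersetCard m).card := by
  have sample_space_eq : ((pmCubeStar k).powersetCard m >>= fun Y => pure (Y : Set (Fin k → ℝ))) =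
      ((pmCubeStar k).powersetCard m).image (fun Y : Finset (Fin k → ℝ) => (Y : Set _)) := by
    ext Z
    simp
  unfold tau
  rw [sample_space_eq, filter_image, card_image_of_injective _ coe_injective]

theorem tau_le_sum_choose_div_two_pow (k m : ℕ) :
    tau k m ≤ (∑ i ∈ range (k + 1), (m.choose i : ℝ)) / 2 ^ m := by
  have filter_subset_filter : ((pmCubeStar k).powersetCard m).filter
      (fun Y : Finset (Fin k → ℝ) =>
        convexHull ℝ (Y : Set (Fin k → ℝ)) ∩ segment ℝ (-(allOne k)) (allOne k) = ∅) ⊆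
      ((pmCubeStar k).powersetCard m).filter (InOpenHalfspace ℝ) :=
    monotone_filter_right _ fun Y _ hY => inOpenHalfspace_of_zero_notMem_convexHull fun h0 =>
      (hY ▸ ⟨h0, zero_mem_segment_neg_self _⟩ : (0 : Fin k → ℝ) ∈ (∅ : Set (Fin k → ℝ)))
  have count := two_pow_mul_card_filter_inOpenHalfspace_le (𝕜 := ℝ) (neg_pmCubeStar k)
    (zero_notMem_pmCubeStar k) m
  rw [Module.finrank_fin_fun] at count
  rw [tau_eq_card_div_card]
  refine div_le_of_le_mul₀ (by positivity) (by positivity) ?_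
  rw [div_mul_eq_mul_div, le_div_iff₀' (by positivity)]
  exact_mod_cast (Nat.mul_le_mul_left _ (card_le_card filter_subset_filter)).trans count

theorem tau_le_exp {k m : ℕ} {δ : ℝ} (hδ : 0 ≤ δ) (hkm : 2 * (k : ℝ) ≤ (1 - δ) * m) :
    tau k m ≤ Real.exp (-(δ ^ 2 / 2) * m) :=
  (tau_le_sum_choose_div_two_pow k m).trans <|
    (div_le_iff₀' (by positivity)).2 (sum_range_choose_le_two_pow_mul_exp hδ hkm)

end LongEdge

-- STATEMENT 15
theorem statement15 (ε : ℝ) (hε : 0 < ε) :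
    Tendsto (fun k => tau k ⌈(2 + ε) * (k : ℝ)⌉₊) atTop (nhds 0) := by
  set δ := ε / (2 + ε) with hδ
  have hδ_pos : 0 < δ := by positivity
  have one_sub_δ : 1 - δ = 2 / (2 + ε) := by rw [hδ]; field_simp; ring
  have tau_bound (k : ℕ) : tau k ⌈(2 + ε) * (k : ℝ)⌉₊ ≤
      Real.exp (-(δ ^ 2 / 2) * (⌈(2 + ε) * (k : ℝ)⌉₊ : ℕ)) := by
    refine tau_le_exp hδ_pos.le ?_
    rw [one_sub_δ, div_mul_eq_mul_div, le_div_iff₀ (by positivity), mul_assoc, mul_comm (k : ℝ)]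
    exact mul_le_mul_of_nonneg_left (Nat.le_ceil _) zero_le_two
  have ceil_tendsto : Tendsto (fun k : ℕ => ((⌈(2 + ε) * (k : ℝ)⌉₊ : ℕ) : ℝ)) atTop atTop :=
    tendsto_natCast_atTop_atTop.comp <| tendsto_nat_ceil_atTop.comp <|
      tendsto_natCast_atTop_atTop.const_mul_atTop (by positivity)
  refine squeeze_zero (fun k => by unfold tau; positivity) tau_bound ?_
  exact Real.tendsto_exp_atBot.comp <| ceil_tendsto.const_mul_atTop_of_neg <|
    neg_neg_of_pos (by positivity)

end
end

section
/- For all d and all n with 3 ≤ n ≤ 2^d − 1, the strict inequality π(d,n) > π(d,n+1) holds; that is, π(d,·) is strictly monotonically decreasing. -/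
/-!
Being an edge is hereditary: if `{v, w}` is an edge of `conv (X ∪ {x})`, it is an edge of `conv X`.
Counting the triples `(X, {v, w}, x)` with `#X = n`, `x ∉ X` and `{v, w}` an edge of
`conv (X ∪ {x})` once by `(X ∪ {x}, {v, w})` and once by `(X, {v, w})` therefore gives
`π(d, n + 1) ≤ π(d, n)`, with strict inequality as soon as adding some point destroys some edge.
For this, let `v` and `w` be neighbours of the vertex `𝟙`, and let `X` contain `v`, `w` and the
fourth vertex of the square through `v`, `𝟙` and `w`, but not `𝟙`: then `{v, w}` is an edge of
`conv X`, and adding `𝟙` turns it into a diagonal of that square.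
-/

open Finset Filter MeasureTheory

open scoped Classical

noncomputable section

section FlagDensity

variable {α : Type*} [DecidableEq α]

/-- The flags `(X, e)` in `U`: an `n`-subset `X` of `U` together with an `m`-subset `e` of `X`. -/
def flags (U : Finset α) (m n : ℕ) : Finset (Finset α × Finset α) :=
  (U.powersetCard n ×ˢ U.powersetCard m).filter fun p => p.2 ⊆ p.1

/-- The probability that a uniformly random flag `(X, e)` with `#X = n` and `#e = m` satisfies
`P`; it is `0` if there are no such flags. -/
def flagDensity (U : Finset α) (P : Finset α × Finset α → Prop) [DecidablePred P] (m n : ℕ) : ℝ :=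
  (#{p ∈ flags U m n | P p} : ℝ) / #(flags U m n)

variable {U X e : Finset α} {x : α} {m n : ℕ} {P : Finset α × Finset α → Prop} [DecidablePred P]

lemma mem_flags : (X, e) ∈ flags U m n ↔ X ⊆ U ∧ #X = n ∧ e ⊆ X ∧ #e = m := by
  simp only [flags, mem_filter, mem_product, mem_powersetCard]
  exact ⟨fun ⟨⟨⟨hXU, hX⟩, _, he⟩, heX⟩ => ⟨hXU, hX, heX, he⟩,
    fun ⟨hXU, hX, heX, he⟩ => ⟨⟨⟨hXU, hX⟩, heX.trans hXU, he⟩, heX⟩⟩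

lemma erase_mem_flags (h : (X, e) ∈ flags U m (n + 1)) (hx : x ∈ X \ e) :
    (X.erase x, e) ∈ flags U m n := by
  obtain ⟨hXU, hX, heX, he⟩ := mem_flags.1 h
  obtain ⟨hxX, hxe⟩ := mem_sdiff.1 hx
  refine mem_flags.2 ⟨(erase_subset x X).trans hXU, ?_, subset_erase.2 ⟨heX, hxe⟩, he⟩
  rw [card_erase_of_mem hxX, hX, Nat.add_sub_cancel]

lemma insert_mem_flags (h : (X, e) ∈ flags U m n) (hx : x ∈ U \ X) :
    (insert x X, e) ∈ flags U m (n + 1) := by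
  obtain ⟨hXU, hX, heX, he⟩ := mem_flags.1 h
  obtain ⟨hxU, hxX⟩ := mem_sdiff.1 hx
  refine mem_flags.2 ⟨insert_subset hxU hXU, ?_, heX.trans (subset_insert x X), he⟩
  rw [card_insert_of_notMem hxX, hX]

/-- Both sides count the triples `(X, e, x)` with `x ∈ U \ X` and `P (X ∪ {x}, e)`. -/
lemma card_filter_flags_succ_mul (U : Finset α) (P : Finset α × Finset α → Prop) [DecidablePred P]
    (m n : ℕ) :
    #{p ∈ flags U m (n + 1) | P p} * (n + 1 - m) =
      ∑ p ∈ flags U m n, #{x ∈ U \ p.1 | P (insert x p.1, p.2)} := by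
  have hcard : ∀ p ∈ {p ∈ flags U m (n + 1) | P p}, #(p.1 \ p.2) = n + 1 - m := by
    rintro ⟨X, e⟩ hp
    obtain ⟨-, hX, heX, he⟩ := mem_flags.1 (mem_filter.1 hp).1
    rw [card_sdiff_of_subset heX, hX, he]
  rw [← sum_const_nat hcard, ← card_sigma, ← card_sigma]
  refine card_nbij' (fun t => ⟨(t.1.1.erase t.2, t.1.2), t.2⟩)
    (fun t => ⟨(insert t.2 t.1.1, t.1.2), t.2⟩) ?_ ?_ ?_ ?_
  · rintro ⟨⟨X, e⟩, x⟩ h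
    simp only [coe_sigma, Set.mem_sigma_iff, mem_coe, mem_filter] at h ⊢
    obtain ⟨⟨hp, hP⟩, hx⟩ := h
    have hxX := (mem_sdiff.1 hx).1
    refine ⟨erase_mem_flags hp hx, mem_sdiff.2 ⟨(mem_flags.1 hp).1 hxX, notMem_erase x X⟩, ?_⟩
    rwa [insert_erase hxX]
  · rintro ⟨⟨X, e⟩, x⟩ h
    simp only [coe_sigma, Set.mem_sigma_iff, mem_coe, mem_filter] at h ⊢
    obtain ⟨hp, hx, hP⟩ := h
    have hxe : x ∉ e := fun hxe => (mem_sdiff.1 hx).2 ((mem_flags.1 hp).2.2.1 hxe)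
    exact ⟨⟨insert_mem_flags hp hx, hP⟩, mem_sdiff.2 ⟨mem_insert_self x X, hxe⟩⟩
  · rintro ⟨⟨X, e⟩, x⟩ h
    simp only [coe_sigma, Set.mem_sigma_iff, mem_coe] at h
    simp only [insert_erase (mem_sdiff.1 h.2).1]
  · rintro ⟨⟨X, e⟩, x⟩ h
    simp only [coe_sigma, Set.mem_sigma_iff, mem_coe, mem_filter] at h
    simp only [erase_insert (mem_sdiff.1 h.2.1).2]

lemma card_sdiff_of_mem_flags (h : (X, e) ∈ flags U m n) : #(U \ X) = #U - n := by
  obtain ⟨hXU, hX, -⟩ := mem_flags.1 h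
  rw [card_sdiff_of_subset hXU, hX]

lemma card_flags_succ_mul (U : Finset α) (m n : ℕ) :
    #(flags U m (n + 1)) * (n + 1 - m) = #(flags U m n) * (#U - n) := by
  have h := card_filter_flags_succ_mul U (fun _ => True) m n
  simp only [filter_true] at h
  rw [h, sum_const_nat fun p hp => card_sdiff_of_mem_flags hp]

lemma card_filter_flags_succ_mul_lt
    (hP : ∀ ⦃X e : Finset α⦄ ⦃x : α⦄, e ⊆ X → P (insert x X, e) → P (X, e))
    (hXe : (X, e) ∈ flags U m n) (hx : x ∈ U \ X) (hP₁ : P (X, e)) (hP₂ : ¬P (insert x X, e)) :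
    #{p ∈ flags U m (n + 1) | P p} * (n + 1 - m) < #{p ∈ flags U m n | P p} * (#U - n) := by
  calc #{p ∈ flags U m (n + 1) | P p} * (n + 1 - m)
      = ∑ p ∈ flags U m n, #{x ∈ U \ p.1 | P (insert x p.1, p.2)} :=
        card_filter_flags_succ_mul U P m n
    _ = ∑ p ∈ flags U m n with P p, #{x ∈ U \ p.1 | P (insert x p.1, p.2)} := by
        refine (sum_filter_of_ne fun p hp hne => ?_).symm
        obtain ⟨y, hy⟩ := card_ne_zero.1 hne
        exact hP (mem_flags.1 hp).2.2.1 (mem_filter.1 hy).2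
    _ < ∑ p ∈ flags U m n with P p, #(U \ p.1) := by
        refine sum_lt_sum (fun p _ => card_filter_le _ _)
          ⟨(X, e), mem_filter.2 ⟨hXe, hP₁⟩, card_lt_card ?_⟩
        exact filter_ssubset.2 ⟨x, hx, hP₂⟩
    _ = #{p ∈ flags U m n | P p} * (#U - n) :=
        sum_const_nat fun p hp => card_sdiff_of_mem_flags (mem_filter.1 hp).1

theorem flagDensity_succ_lt
    (hP : ∀ ⦃X e : Finset α⦄ ⦃x : α⦄, e ⊆ X → P (insert x X, e) → P (X, e))
    (hXe : (X, e) ∈ flags U m n) (hx : x ∈ U \ X) (hP₁ : P (X, e)) (hP₂ : ¬P (insert x X, e)) :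
    flagDensity U P m (n + 1) < flagDensity U P m n := by
  have hr : ((n + 1 - m : ℕ) : ℝ) ≠ 0 := by
    obtain ⟨-, rfl, heX, rfl⟩ := mem_flags.1 hXe
    exact Nat.cast_ne_zero.2 (Nat.sub_pos_of_lt (Nat.lt_succ_of_le (card_le_card heX))).ne'
  have hs : (0 : ℝ) < (#U - n : ℕ) := by
    rw [← card_sdiff_of_mem_flags hXe]
    exact Nat.cast_pos.2 (card_pos.2 ⟨x, hx⟩)
  have htotal : (0 : ℝ) < #(flags U m n) := Nat.cast_pos.2 (card_pos.2 ⟨_, hXe⟩)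
  have hlt := card_filter_flags_succ_mul_lt hP hXe hx hP₁ hP₂
  calc flagDensity U P m (n + 1)
      = (#{p ∈ flags U m (n + 1) | P p} * (n + 1 - m : ℕ)) /
          (#(flags U m (n + 1)) * (n + 1 - m : ℕ)) := (mul_div_mul_right _ _ hr).symm
    _ = (#{p ∈ flags U m (n + 1) | P p} * (n + 1 - m : ℕ)) /
          (#(flags U m n) * (#U - n : ℕ)) := by
        rw [← Nat.cast_mul #(flags U m (n + 1)), card_flags_succ_mul, Nat.cast_mul]
    _ < (#{p ∈ flags U m n | P p} * (#U - n : ℕ)) / (#(flags U m n) * (#U - n : ℕ)) :=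
        div_lt_div_of_pos_right (by exact_mod_cast hlt) (mul_pos htotal hs)
    _ = flagDensity U P m n := mul_div_mul_right _ _ hs.ne'

end FlagDensity

section Faces

variable {𝕜 E : Type*} [Field 𝕜] [LinearOrder 𝕜] [IsStrictOrderedRing 𝕜]
  [AddCommGroup E] [Module 𝕜 E] {A B : Set E}

lemma convex_setOf_le_and_eq_imp_mem (hB : Convex 𝕜 B) (l : E →ₗ[𝕜] 𝕜) (c : 𝕜) :
    Convex 𝕜 {z | l z ≤ c ∧ (l z = c → z ∈ B)} := by
  refine convex_iff_forall_pos.2 fun p hp q hq a b ha hb hab => ?_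
  have hl : c - l (a • p + b • q) = a * (c - l p) + b * (c - l q) := by
    simp only [map_add, map_smul, smul_eq_mul]
    linear_combination -c * hab
  have hpa : 0 ≤ a * (c - l p) := mul_nonneg ha.le (sub_nonneg.2 hp.1)
  have hqb : 0 ≤ b * (c - l q) := mul_nonneg hb.le (sub_nonneg.2 hq.1)
  refine ⟨sub_nonneg.1 (hl ▸ add_nonneg hpa hqb), fun hc => ?_⟩
  rw [hc, sub_self, eq_comm, add_eq_zero_iff_of_nonneg hpa hqb, mul_eq_zero_iff_left ha.ne',
    mul_eq_zero_iff_left hb.ne', sub_eq_zero, sub_eq_zero] at hl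
  exact hB (hp.2 hl.1.symm) (hq.2 hl.2.symm) ha.le hb.le hab

lemma isExposed_convexHull_sep_eq [TopologicalSpace 𝕜] [TopologicalSpace E]
    {l : StrongDual 𝕜 E} {c : 𝕜} (hle : ∀ x ∈ A, l x ≤ c) :
    IsExposed 𝕜 (convexHull 𝕜 A) (convexHull 𝕜 {x ∈ A | l x = c}) := by
  intro hne
  obtain ⟨x₀, hx₀A, hx₀⟩ := convexHull_nonempty_iff.1 hne
  have hhull : convexHull 𝕜 A ⊆ {z | l z ≤ c ∧ (l z = c → z ∈ convexHull 𝕜 {x ∈ A | l x = c})} :=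
    convexHull_min (fun x hx => ⟨hle x hx, fun h => subset_convexHull 𝕜 _ ⟨hx, h⟩⟩)
      (convex_setOf_le_and_eq_imp_mem (convex_convexHull 𝕜 _) l.toLinearMap c)
  have hface : convexHull 𝕜 {x ∈ A | l x = c} ⊆ {z | l z = c} :=
    convexHull_min (fun _ hx => hx.2) (convex_hyperplane l.toLinearMap.isLinear c)
  refine ⟨l, Set.Subset.antisymm (fun z hz => ⟨convexHull_mono (Set.sep_subset _ _) hz, ?_⟩) ?_⟩
  · exact fun y hy => (hhull hy).1.trans_eq (hface hz).symm
  · rintro z ⟨hz, hmax⟩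
    exact (hhull hz).2 ((hhull hz).1.antisymm (hx₀ ▸ hmax x₀ (subset_convexHull 𝕜 A hx₀A)))

lemma mem_of_isExtreme_of_add_eq_add {v w x y : E} (hAB : IsExtreme 𝕜 A B) (hB : Convex 𝕜 B)
    (hv : v ∈ B) (hw : w ∈ B) (hx : x ∈ A) (hy : y ∈ A) (hsum : x + y = v + w) : x ∈ B := by
  have hmid : midpoint 𝕜 v w = midpoint 𝕜 x y := by
    rw [midpoint_eq_smul_add, midpoint_eq_smul_add, hsum]
  refine hAB.2 hx hy (hB.midpoint_mem hv hw) (hmid ▸ ?_)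
  exact midpoint_mem_openSegment x y

end Faces

lemma edgeEvent_iff {d : ℕ} {X e : Finset (Fin d → ℝ)} :
    EdgeEvent (X, e) ↔ #e = 2 ∧
      IsExposed ℝ (convexHull ℝ (X : Set (Fin d → ℝ))) (convexHull ℝ (e : Set (Fin d → ℝ))) := by
  constructor
  · rintro ⟨v, w, rfl, hne, hexp⟩
    exact ⟨card_pair hne, by rwa [coe_pair, convexHull_pair]⟩
  · rintro ⟨hcard, hexp⟩
    obtain ⟨v, w, hne, rfl⟩ := card_eq_two.1 hcard
    exact ⟨v, w, rfl, hne, by rwa [coe_pair, convexHull_pair] at hexp⟩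

lemma edgeEvent_of_insert {d : ℕ} {X e : Finset (Fin d → ℝ)} {x : Fin d → ℝ} (heX : e ⊆ X)
    (h : EdgeEvent (insert x X, e)) : EdgeEvent (X, e) := by
  rw [edgeEvent_iff] at h ⊢
  exact ⟨h.1, h.2.mono (convexHull_mono (coe_subset.2 (subset_insert x X)))
    (convexHull_mono (coe_subset.2 heX))⟩

section SumOneLe

variable {ι R : Type*} [Semiring R] [PartialOrder R] [IsStrictOrderedRing R] {s : Finset ι}
  {c : ι → R}

lemma card_le_sum (hc : ∀ k ∈ s, 1 ≤ c k) : (#s : R) ≤ ∑ k ∈ s, c k := by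
  simpa only [nsmul_one] using card_nsmul_le_sum s c 1 hc

lemma one_le_sum (hs : s.Nonempty) (hc : ∀ k ∈ s, 1 ≤ c k) : 1 ≤ ∑ k ∈ s, c k :=
  (Nat.one_le_cast.2 hs.card_pos).trans (card_le_sum hc)

lemma exists_eq_singleton_of_sum_eq_one (hc : ∀ k ∈ s, 1 ≤ c k) (hsum : ∑ k ∈ s, c k = 1) :
    ∃ k, s = {k} ∧ c k = 1 := by
  have hcard : #s ≤ 1 := Nat.cast_le_one.1 (hsum ▸ card_le_sum hc)
  have hs : s.Nonempty := nonempty_of_sum_ne_zero (hsum ▸ one_ne_zero)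
  obtain ⟨k, rfl⟩ := card_eq_one.1 (hcard.antisymm hs.card_pos)
  exact ⟨k, rfl, by rwa [sum_singleton] at hsum⟩

end SumOneLe

section SignVertex

variable {d : ℕ}

/-- The vertex of `{-1,+1}^d` whose negative coordinates are those in `s`; thus `signVertex ∅ = 𝟙`,
and its neighbours on the cube are the vertices `signVertex {i}`. -/
def signVertex (s : Finset (Fin d)) : Fin d → ℝ := fun k => if k ∈ s then -1 else 1

lemma signVertex_apply_eq_neg_one_iff {s : Finset (Fin d)} {k : Fin d} :
    signVertex s k = -1 ↔ k ∈ s := by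
  by_cases hk : k ∈ s
  · simp only [signVertex, hk, if_true]
  · simp only [signVertex, hk, if_false]
    norm_num

lemma signVertex_injective : Function.Injective (signVertex (d := d)) := fun s t h => by
  ext k
  rw [← signVertex_apply_eq_neg_one_iff, h, signVertex_apply_eq_neg_one_iff]

lemma pmCube_eq_image_signVertex (d : ℕ) : pmCube d = univ.image signVertex := by
  ext z
  simp only [pmCube, mem_image, mem_univ, true_and]
  constructor
  · rintro ⟨f, rfl⟩
    exact ⟨univ.filter (f · = false), funext fun k => by cases hk : f k <;> simp [signVertex, hk]⟩
  · rintro ⟨s, rfl⟩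
    exact ⟨fun k => k ∉ s, funext fun k => by by_cases hk : k ∈ s <;> simp [signVertex, hk]⟩

lemma signVertex_mem_pmCube (s : Finset (Fin d)) : signVertex s ∈ pmCube d :=
  pmCube_eq_image_signVertex d ▸ mem_image_of_mem _ (mem_univ s)

lemma card_pmCube (d : ℕ) : #(pmCube d) = 2 ^ d := by
  rw [pmCube_eq_image_signVertex, card_image_of_injective _ signVertex_injective, card_univ,
    Fintype.card_finset, Fintype.card_fin]

lemma sum_mul_signVertex (c : Fin d → ℝ) (s : Finset (Fin d)) :
    ∑ k, c k * signVertex s k = ∑ k, c k - 2 * ∑ k ∈ s, c k := by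
  rw [← sum_ite_mem_eq s, mul_sum, ← sum_sub_distrib]
  refine sum_congr rfl fun k _ => ?_
  by_cases hk : k ∈ s
  · simp only [signVertex, hk, if_true]
    ring
  · simp only [signVertex, hk, if_false]
    ring

lemma signVertex_empty_add_signVertex_pair {i j : Fin d} (hij : i ≠ j) :
    signVertex ∅ + signVertex {i, j} = signVertex {i} + signVertex {j} := by
  ext k
  rcases eq_or_ne k i with rfl | hi
  · simp [signVertex, hij]
  · simp [signVertex, hi]

lemma signVertex_empty_notMem_segment {i j : Fin d} (hij : i ≠ j) :
    signVertex ∅ ∉ segment ℝ (signVertex {i}) (signVertex {j}) := by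
  rintro ⟨a, b, -, -, -, h⟩
  have hi : -a + b = 1 := by simpa [signVertex, hij] using congrFun h i
  have hj : a + -b = 1 := by simpa [signVertex, hij.symm] using congrFun h j
  linarith

lemma exists_nonempty_signVertex_eq {z : Fin d → ℝ} (hz : z ∈ (pmCube d).erase (signVertex ∅)) :
    ∃ s : Finset (Fin d), s.Nonempty ∧ signVertex s = z := by
  obtain ⟨hne, hz⟩ := mem_erase.1 hz
  rw [pmCube_eq_image_signVertex] at hz
  obtain ⟨s, -, rfl⟩ := mem_image.1 hz
  exact ⟨s, nonempty_iff_ne_empty.2 fun h => hne (h ▸ rfl), rfl⟩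

/-- With `𝟙` removed, its neighbours maximize `z ↦ 𝟙ᵀz` over the rest of the cube; doubling the
coefficients outside `T` leaves only the neighbours indexed by `T` as maximizers. -/
lemma isExposed_convexHull_image_signVertex_singleton {X : Finset (Fin d → ℝ)}
    {T : Finset (Fin d)} (hX : X ⊆ (pmCube d).erase (signVertex ∅))
    (hT : T.image (fun k => signVertex {k}) ⊆ X) :
    IsExposed ℝ (convexHull ℝ (X : Set (Fin d → ℝ)))
      (convexHull ℝ (T.image (fun k => signVertex {k}) : Set (Fin d → ℝ))) := by
  let c : Fin d → ℝ := fun k => if k ∈ T then 1 else 2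
  let l : StrongDual ℝ (Fin d → ℝ) := ∑ k, c k • ContinuousLinearMap.proj k
  have hl : ∀ s, l (signVertex s) = ∑ k, c k - 2 * ∑ k ∈ s, c k := fun s => by
    simp [l, ← sum_mul_signVertex]
  have hc : ∀ k, 1 ≤ c k := fun k => by
    by_cases hk : k ∈ T <;> simp [c, hk]
  have hle : ∀ z ∈ X, l z ≤ ∑ k, c k - 2 := fun z hz => by
    obtain ⟨s, hs, rfl⟩ := exists_nonempty_signVertex_eq (hX hz)
    linarith [hl s, one_le_sum hs fun k _ => hc k]
  have heq : {z ∈ (X : Set (Fin d → ℝ)) | l z = ∑ k, c k - 2} =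
      (T.image (fun k => signVertex {k}) : Set (Fin d → ℝ)) := by
    ext z
    refine ⟨fun ⟨hz, hlz⟩ => ?_, fun hz => ⟨hT hz, ?_⟩⟩
    · obtain ⟨s, -, rfl⟩ := exists_nonempty_signVertex_eq (hX hz)
      have hsum : ∑ k ∈ s, c k = 1 := by linarith [hl s]
      obtain ⟨k, rfl, hck⟩ := exists_eq_singleton_of_sum_eq_one (fun k _ => hc k) hsum
      have hk : k ∈ T := by
        by_contra hk
        simp [c, hk] at hck
      exact mem_image_of_mem _ hk
    · obtain ⟨k, hk, rfl⟩ := mem_image.1 hz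
      simp [hl, c, hk]
  rw [← heq]
  exact isExposed_convexHull_sep_eq hle

lemma edgeEvent_signVertex_pair {X : Finset (Fin d → ℝ)} {i j : Fin d} (hij : i ≠ j)
    (hX : X ⊆ (pmCube d).erase (signVertex ∅)) (he : {signVertex {i}, signVertex {j}} ⊆ X) :
    EdgeEvent (X, {signVertex {i}, signVertex {j}}) := by
  have himage : ({i, j} : Finset (Fin d)).image (fun k => signVertex {k}) =
      {signVertex {i}, signVertex {j}} := by
    rw [image_insert, image_singleton]
  refine edgeEvent_iff.2 ⟨card_pair fun h => hij (singleton_injective (signVertex_injective h)), ?_⟩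
  rw [← himage] at he ⊢
  exact isExposed_convexHull_image_signVertex_singleton hX he

lemma not_edgeEvent_signVertex_pair {X : Finset (Fin d → ℝ)} {i j : Fin d} (hij : i ≠ j)
    (hempty : signVertex ∅ ∈ X) (hpair : signVertex {i, j} ∈ X) :
    ¬EdgeEvent (X, {signVertex {i}, signVertex {j}}) := by
  intro h
  have hexp := (edgeEvent_iff.1 h).2
  rw [coe_pair, convexHull_pair] at hexp
  exact signVertex_empty_notMem_segment hij <|
    mem_of_isExtreme_of_add_eq_add hexp.isExtreme (convex_segment _ _)
      (left_mem_segment ℝ _ _) (right_mem_segment ℝ _ _)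
      (subset_convexHull ℝ _ hempty) (subset_convexHull ℝ _ hpair)
      (signVertex_empty_add_signVertex_pair hij)

lemma exists_superset_signVertex_card_eq (i j : Fin d) {n : ℕ} (hn3 : 3 ≤ n)
    (hn : n ≤ 2 ^ d - 1) :
    ∃ X ⊆ (pmCube d).erase (signVertex ∅), #X = n ∧
      {signVertex {i}, signVertex {j}, signVertex {i, j}} ⊆ X := by
  have hsub : {signVertex {i}, signVertex {j}, signVertex {i, j}} ⊆
      (pmCube d).erase (signVertex ∅) := by
    simp [insert_subset_iff, signVertex_mem_pmCube, signVertex_injective.eq_iff]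
  have hcard : n ≤ #((pmCube d).erase (signVertex ∅)) := by
    rwa [card_erase_of_mem (signVertex_mem_pmCube ∅), card_pmCube]
  obtain ⟨X, hX, hXcube, hXn⟩ :=
    exists_subsuperset_card_eq hsub (card_le_three.trans hn3) hcard
  exact ⟨X, hXcube, hXn, hX⟩

end SignVertex

lemma piEdge_eq_flagDensity (d n : ℕ) : piEdge d n = flagDensity (pmCube d) EdgeEvent 2 n := rfl

-- STATEMENT 18
theorem statement18 (d n : ℕ) (hn3 : 3 ≤ n) (hn : n ≤ 2 ^ d - 1) :
    piEdge d (n + 1) < piEdge d n := by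
  have hd : 2 ≤ d := by
    by_contra! hd
    interval_cases d <;> omega
  obtain ⟨i, j, hij⟩ := (Fin.nontrivial_iff_two_le.2 hd).exists_pair_ne
  obtain ⟨X, hX, hXn, hpts⟩ := exists_superset_signVertex_card_eq i j hn3 hn
  have he : {signVertex {i}, signVertex {j}} ⊆ X := by
    refine Subset.trans ?_ hpts
    simp [insert_subset_iff]
  have hXcube : X ⊆ pmCube d := hX.trans (erase_subset _ _)
  have hedge := edgeEvent_signVertex_pair hij hX he
  have hnew : signVertex ∅ ∈ pmCube d \ X :=
    mem_sdiff.2 ⟨signVertex_mem_pmCube ∅, fun h => (mem_erase.1 (hX h)).1 rfl⟩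
  have hnot := not_edgeEvent_signVertex_pair hij (mem_insert_self (signVertex ∅) X)
    (mem_insert_of_mem (hpts (by simp)))
  simpa only [piEdge_eq_flagDensity] using
    flagDensity_succ_lt (fun _ _ _ => edgeEvent_of_insert)
      (mem_flags.2 ⟨hXcube, hXn, he, (edgeEvent_iff.1 hedge).1⟩) hnew hedge hnot

end
end
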